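/- Let n ≥ 2 and let K be a nonempty compact convex subset of ℝⁿ. Then for any two points x, y in the topological boundary (frontier) of K, there exists a continuous path γ : [0, 1] → ℝⁿ with γ(0) = x, γ(1) = y, whose image is contained in the frontier of K, and whose length (total variation) is at most 3 · diam(K). In other words, the intrinsic diameter of the boundary of a compact convex body is at most three times its extrinsic diameter. -/

import Mathlib

/-!
The nearest-point projection onto a closed convex set `K` of a Hilbert space does not increase
length and sends curves avoiding the interior of `K` to curves in the frontier, so it suffices to
find a curve of length at most `3 * diam K` outside the interior, from `x` to some point which
projects to `y`, for instance a point on the ray from `y` along an outer normal `v` at `y`.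

Let `u` be an outer unit normal at `x` and project orthogonally to a plane containing the directions
`u` and `v`. The image of `K` lies in a rectangle with sides at most `diam K`, one of which contains
the image of `x`. Whatever projects to the boundary of the rectangle is outside the interior of `K`.
First move `x` along its fibre of the projection into the affine plane through `y`, at a cost
of at most `dist x y ≤ diam K`; then follow the boundary of the rectangle until the ray from `y`
leaves it, at a cost of at most half the perimeter, that is `2 * diam K`.
-/

open Set Bornology
open scoped RealInnerProductSpace

theorem lipschitzWith_of_lipschitzOnWith_Iic_Ici {X : Type*} [PseudoMetricSpace X] {C : NNReal}
    {γ : ℝ → X} {l : ℝ} (hleft : LipschitzOnWith C γ (Iic l))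
    (hright : LipschitzOnWith C γ (Ici l)) : LipschitzWith C γ := by
  refine LipschitzWith.of_dist_le_mul fun s t => ?_
  wlog hst : s ≤ t generalizing s t
  · simpa only [dist_comm] using this t s (le_of_not_ge hst)
  rcases le_total t l with htl | hlt
  · exact hleft.dist_le_mul s (hst.trans htl) t htl
  rcases le_total l s with hls | hsl
  · exact hright.dist_le_mul s hls t hlt
  calc dist (γ s) (γ t) ≤ dist (γ s) (γ l) + dist (γ l) (γ t) := dist_triangle _ _ _
    _ ≤ C * dist s l + C * dist l t :=
      add_le_add (hleft.dist_le_mul s hsl l self_mem_Iic)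
        (hright.dist_le_mul l self_mem_Ici t hlt)
    _ = C * dist s t := by
      rw [Real.dist_eq, Real.dist_eq, Real.dist_eq, abs_of_nonpos (sub_nonpos.2 hsl),
        abs_of_nonpos (sub_nonpos.2 hlt), abs_of_nonpos (sub_nonpos.2 hst)]
      ring

/-- `b` can be reached from `a` by a curve of length at most `l` inside `S`. The curve is
1-Lipschitz and parametrized by all of `ℝ`, with `a` at time `0` and `b` at time `l`. -/
def LipschitzJoined {X : Type*} [PseudoMetricSpace X] (S : Set X) (a b : X) (l : ℝ) : Prop :=
  0 ≤ l ∧ ∃ c : ℝ → X, LipschitzWith 1 c ∧ c 0 = a ∧ c l = b ∧ ∀ t, c t ∈ S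

namespace LipschitzJoined

section Metric

variable {X Y : Type*} [PseudoMetricSpace X] [PseudoMetricSpace Y] {S T : Set X} {a b d : X}
  {l m : ℝ}

theorem mono (h : LipschitzJoined S a b l) (hST : S ⊆ T) (hlm : l ≤ m) :
    LipschitzJoined T a b m := by
  obtain ⟨hl, c, hc, rfl, rfl, hcS⟩ := h
  have hclip : LipschitzWith 1 fun t => c (min t l) := by
    simpa [Function.comp_def] using hc.comp (LipschitzWith.id.min_const l)
  exact ⟨hl.trans hlm, fun t => c (min t l), hclip, by simp [hl], by simp [hlm],
    fun t => hST (hcS _)⟩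

theorem map {U : Set Y} {f : X → Y} (h : LipschitzJoined S a b l) (hf : LipschitzWith 1 f)
    (hfS : MapsTo f S U) : LipschitzJoined U (f a) (f b) l := by
  obtain ⟨hl, c, hc, rfl, rfl, hcS⟩ := h
  exact ⟨hl, f ∘ c, by simpa using hf.comp hc, rfl, rfl, fun t => hfS (hcS t)⟩

theorem trans (hab : LipschitzJoined S a b l) (hbd : LipschitzJoined S b d m) :
    LipschitzJoined S a d (l + m) := by
  obtain ⟨hl, c, hc, rfl, hcl, hcS⟩ := hab
  obtain ⟨hm, e, he, he0, rfl, heS⟩ := hbd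
  let γ : ℝ → X := fun t => if t ≤ l then c t else e (t - l)
  have hγ_left {t : ℝ} (ht : t ≤ l) : γ t = c t := if_pos ht
  have hγ_right {t : ℝ} (ht : l ≤ t) : γ t = e (t - l) := by
    rcases ht.eq_or_lt with rfl | ht
    · rw [hγ_left le_rfl, hcl, sub_self, he0]
    · exact if_neg ht.not_ge
  have hleft : LipschitzOnWith 1 γ (Iic l) := LipschitzOnWith.of_dist_le_mul fun s hs t ht => by
    simpa [hγ_left hs, hγ_left ht] using hc.dist_le_mul s t
  have hright : LipschitzOnWith 1 γ (Ici l) := LipschitzOnWith.of_dist_le_mul fun s hs t ht => by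
    simpa [hγ_right hs, hγ_right ht] using he.dist_le_mul (s - l) (t - l)
  have hγ : LipschitzWith 1 γ := lipschitzWith_of_lipschitzOnWith_Iic_Ici hleft hright
  refine ⟨add_nonneg hl hm, γ, hγ, hγ_left hl, ?_, fun t => ?_⟩
  · rw [hγ_right (le_add_of_nonneg_right hm), add_sub_cancel_left]
  · rcases le_total t l with ht | ht
    · exact hγ_left ht ▸ hcS t
    · exact hγ_right ht ▸ heS (t - l)

theorem exists_path (h : LipschitzJoined S a b l) :
    ∃ γ : ℝ → X, ContinuousOn γ (Icc 0 1) ∧ γ 0 = a ∧ γ 1 = b ∧ γ '' Icc 0 1 ⊆ S ∧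
      eVariationOn γ (Icc 0 1) ≤ ENNReal.ofReal l := by
  obtain ⟨hl, c, hc, rfl, rfl, hcS⟩ := h
  have hscale : MonotoneOn (fun t : ℝ => l * t) (Icc 0 1) :=
    (monotone_mul_left_of_nonneg hl).monotoneOn _
  refine ⟨c ∘ fun t => l * t, (hc.continuous.comp (by fun_prop)).continuousOn, by simp, by simp,
    image_subset_iff.2 fun t _ => hcS _, ?_⟩
  calc eVariationOn (c ∘ fun t => l * t) (Icc 0 1)
      ≤ 1 * eVariationOn (fun t => l * t) (Icc 0 1) :=
        hc.lipschitzOnWith.comp_eVariationOn_le (mapsTo_univ _ _)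
    _ = ENNReal.ofReal l := by
        simpa using hscale.eVariationOn_eq (left_mem_Icc.2 zero_le_one)
          (right_mem_Icc.2 zero_le_one)

end Metric

theorem of_segment_subset {E : Type*} [NormedAddCommGroup E] [NormedSpace ℝ E] {S : Set E}
    {a b : E} (h : segment ℝ a b ⊆ S) : LipschitzJoined S a b (dist a b) := by
  rcases eq_or_ne a b with rfl | hab
  · exact ⟨dist_nonneg, fun _ => a, LipschitzWith.const' a, rfl, rfl,
      fun _ => h (left_mem_segment ℝ a a)⟩
  have hdist : nndist a b ≠ 0 := nndist_eq_zero.not.2 hab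
  let clamp : ℝ → ℝ := fun t => projIcc (0 : ℝ) 1 zero_le_one t
  let scale : ℝ → ℝ := fun t => (dist a b)⁻¹ * t
  have hclamp : LipschitzWith 1 clamp := LipschitzWith.projIcc zero_le_one
  have hscale : LipschitzWith (nndist a b)⁻¹ scale :=
    LipschitzWith.of_dist_le_mul fun s t => by simp [scale, Real.dist_eq, ← mul_sub, abs_mul]
  have hlip := (lipschitzWith_lineMap (𝕜 := ℝ) a b).comp (hclamp.comp hscale)
  rw [one_mul, mul_inv_cancel₀ hdist] at hlip
  refine ⟨dist_nonneg, _, hlip, by simp [clamp, scale], by simp [clamp, scale, hab],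
    fun t => h ?_⟩
  exact segment_eq_image_lineMap ℝ a b ▸ mem_image_of_mem _ (Subtype.property _)

theorem of_lipschitzWith {X : Type*} [PseudoMetricSpace X] {S : Set X} {g : ℝ → X} {s t : ℝ}
    (hg : LipschitzWith 1 g) (hgS : MapsTo g (uIcc s t) S) :
    LipschitzJoined S (g s) (g t) |s - t| :=
  (of_segment_subset (segment_eq_uIcc s t).subset).map hg hgS

end LipschitzJoined

section Rectangle

variable {X : Type*} [PseudoMetricSpace X] {S : Set X} {f : ℝ → ℝ → X} {a₁ a₂ b₁ b₂ s s' r r' : ℝ}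

theorem exists_mem_frontier_Icc_abs_sub_add_abs_sub_le (hr : r ∈ Icc b₁ b₂)
    (hr' : r' ∈ Icc b₁ b₂) : ∃ r₀ ∈ frontier (Icc b₁ b₂), |r - r₀| + |r₀ - r'| ≤ b₂ - b₁ := by
  rw [frontier_Icc (hr.1.trans hr.2)]
  rcases le_total (r + r') (b₁ + b₂) with h | h
  · refine ⟨b₁, by simp, ?_⟩
    rw [abs_of_nonneg (sub_nonneg.2 hr.1), abs_of_nonpos (sub_nonpos.2 hr'.1)]
    linarith
  · refine ⟨b₂, by simp, ?_⟩
    rw [abs_of_nonpos (sub_nonpos.2 hr.2), abs_of_nonneg (sub_nonneg.2 hr'.2)]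
    linarith

theorem lipschitzJoined_of_mem_adjacent_sides (hf₁ : ∀ r, LipschitzWith 1 fun s => f s r)
    (hf₂ : ∀ s, LipschitzWith 1 (f s))
    (hS₁ : ∀ s ∈ frontier (Icc a₁ a₂), ∀ r ∈ Icc b₁ b₂, f s r ∈ S)
    (hS₂ : ∀ s ∈ Icc a₁ a₂, ∀ r ∈ frontier (Icc b₁ b₂), f s r ∈ S)
    (hs : s ∈ frontier (Icc a₁ a₂)) (hr : r ∈ Icc b₁ b₂)
    (hs' : s' ∈ Icc a₁ a₂) (hr' : r' ∈ frontier (Icc b₁ b₂)) :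
    LipschitzJoined S (f s r) (f s' r') (|s - s'| + |r - r'|) := by
  have hsI : s ∈ Icc a₁ a₂ := isClosed_Icc.frontier_subset hs
  have hrI : r' ∈ Icc b₁ b₂ := isClosed_Icc.frontier_subset hr'
  have hside : LipschitzJoined S (f s r) (f s r') |r - r'| :=
    .of_lipschitzWith (hf₂ s) fun t ht => hS₁ s hs t (uIcc_subset_Icc hr hrI ht)
  have hside' : LipschitzJoined S (f s r') (f s' r') |s - s'| :=
    .of_lipschitzWith (hf₁ r') fun t ht => hS₂ t (uIcc_subset_Icc hsI hs' ht) r' hr'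
  exact add_comm |s - s'| _ ▸ hside.trans hside'

theorem lipschitzJoined_of_mem_parallel_sides (hf₁ : ∀ r, LipschitzWith 1 fun s => f s r)
    (hf₂ : ∀ s, LipschitzWith 1 (f s))
    (hS₁ : ∀ s ∈ frontier (Icc a₁ a₂), ∀ r ∈ Icc b₁ b₂, f s r ∈ S)
    (hS₂ : ∀ s ∈ Icc a₁ a₂, ∀ r ∈ frontier (Icc b₁ b₂), f s r ∈ S)
    (hs : s ∈ frontier (Icc a₁ a₂)) (hr : r ∈ Icc b₁ b₂)
    (hs' : s' ∈ frontier (Icc a₁ a₂)) (hr' : r' ∈ Icc b₁ b₂) :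
    LipschitzJoined S (f s r) (f s' r') (|s - s'| + (b₂ - b₁)) := by
  -- Going round by the side `b₁` and going round by the side `b₂` together cost
  -- `2 * (b₂ - b₁)` in the second coordinate.
  obtain ⟨r₀, hr₀, hlen⟩ := exists_mem_frontier_Icc_abs_sub_add_abs_sub_le hr hr'
  have hr₀I : r₀ ∈ Icc b₁ b₂ := isClosed_Icc.frontier_subset hr₀
  have hturn := lipschitzJoined_of_mem_adjacent_sides hf₁ hf₂ hS₁ hS₂ hs hr
    (isClosed_Icc.frontier_subset hs') hr₀
  have hside : LipschitzJoined S (f s' r₀) (f s' r') |r₀ - r'| :=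
    .of_lipschitzWith (hf₂ s') fun t ht => hS₁ s' hs' t (uIcc_subset_Icc hr₀I hr' ht)
  exact (hturn.trans hside).mono Subset.rfl (by linarith)

theorem lipschitzJoined_of_mem_frontier_rectangle {p p' : ℝ × ℝ}
    (hf₁ : ∀ r, LipschitzWith 1 fun s => f s r) (hf₂ : ∀ s, LipschitzWith 1 (f s))
    (hS : ∀ p ∈ frontier (Icc a₁ a₂ ×ˢ Icc b₁ b₂), f p.1 p.2 ∈ S)
    (hp : p ∈ frontier (Icc a₁ a₂ ×ˢ Icc b₁ b₂)) (hp' : p' ∈ frontier (Icc a₁ a₂ ×ˢ Icc b₁ b₂)) :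
    LipschitzJoined S (f p.1 p.2) (f p'.1 p'.2) ((a₂ - a₁) + (b₂ - b₁)) := by
  have habs {c d t t' : ℝ} (ht : t ∈ Icc c d) (ht' : t' ∈ Icc c d) : |t - t'| ≤ d - c :=
    Real.dist_le_of_mem_Icc ht ht'
  have hmem := (isClosed_Icc.prod isClosed_Icc).frontier_subset hp
  have hmem' := (isClosed_Icc.prod isClosed_Icc).frontier_subset hp'
  rw [frontier_prod_eq, closure_Icc, closure_Icc] at hS hp hp'
  have hS₁ : ∀ s ∈ frontier (Icc a₁ a₂), ∀ r ∈ Icc b₁ b₂, f s r ∈ S :=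
    fun s hs r hr => hS (s, r) (Or.inr ⟨hs, hr⟩)
  have hS₂ : ∀ s ∈ Icc a₁ a₂, ∀ r ∈ frontier (Icc b₁ b₂), f s r ∈ S :=
    fun s hs r hr => hS (s, r) (Or.inl ⟨hs, hr⟩)
  have hS₁' : ∀ r ∈ Icc b₁ b₂, ∀ s ∈ frontier (Icc a₁ a₂), f s r ∈ S :=
    fun r hr s hs => hS₁ s hs r hr
  have hS₂' : ∀ r ∈ frontier (Icc b₁ b₂), ∀ s ∈ Icc a₁ a₂, f s r ∈ S :=
    fun r hr s hs => hS₂ s hs r hr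
  have hlen₁ := habs hmem.1 hmem'.1
  have hlen₂ := habs hmem.2 hmem'.2
  rcases hp with ⟨hs, hr⟩ | ⟨hs, hr⟩ <;> rcases hp' with ⟨hs', hr'⟩ | ⟨hs', hr'⟩
  · exact (lipschitzJoined_of_mem_parallel_sides hf₂ hf₁ hS₂' hS₁' hr hs hr' hs').mono
      Subset.rfl (by linarith)
  · exact (lipschitzJoined_of_mem_adjacent_sides hf₂ hf₁ hS₂' hS₁' hr hs hr' hs').mono
      Subset.rfl (by linarith)
  · exact (lipschitzJoined_of_mem_adjacent_sides hf₁ hf₂ hS₁ hS₂ hs hr hs' hr').mono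
      Subset.rfl (by linarith)
  · exact (lipschitzJoined_of_mem_parallel_sides hf₁ hf₂ hS₁ hS₂ hs hr hs' hr').mono
      Subset.rfl (by linarith)

end Rectangle

theorem exists_nonneg_add_smul_mem_frontier {E : Type*} [NormedAddCommGroup E] [NormedSpace ℝ E]
    {s : Set E} {p d : E} (hs : IsBounded s) (hp : p ∈ s) (hd : d ≠ 0) :
    ∃ t : ℝ, 0 ≤ t ∧ p + t • d ∈ frontier s := by
  let ray : ℝ → E := fun t => p + |t| • d
  have hray : Continuous ray := by fun_prop
  have hleaves : ray ⁻¹' s ≠ univ := fun huniv => by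
    let T : ℝ := (Metric.diam s + 1) / ‖d‖
    have hT : 0 ≤ T := div_nonneg (add_nonneg Metric.diam_nonneg zero_le_one) (norm_nonneg d)
    have hnear : dist (ray T) p ≤ Metric.diam s :=
      Metric.dist_le_diam_of_mem hs (preimage_eq_univ_iff.1 huniv ⟨T, rfl⟩) hp
    have hfar : dist (ray T) p = Metric.diam s + 1 := by
      rw [dist_eq_norm, add_sub_cancel_left, norm_smul, Real.norm_eq_abs, abs_abs,
        abs_of_nonneg hT, div_mul_cancel₀ _ (norm_ne_zero_iff.2 hd)]
    linarith
  obtain ⟨t, ht⟩ := nonempty_frontier_iff.2 ⟨⟨0, by simpa [ray] using hp⟩, hleaves⟩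
  exact ⟨|t|, abs_nonneg t, hray.frontier_preimage_subset s ht⟩

section NormalCone

variable {E : Type*} [NormedAddCommGroup E] [InnerProductSpace ℝ E] {K : Set E} {a b p q u z : E}
  {l : ℝ}

/-- The cone of outer normals to `K` at `p`. When `K` is convex and `p ∈ K`, the points whose
nearest point in `K` is `p` are those of `p + normalCone K p`. -/
def normalCone (K : Set E) (p : E) : Set E :=
  {u | ∀ k ∈ K, ⟪u, k - p⟫ ≤ 0}

theorem zero_mem_normalCone : 0 ∈ normalCone K p := by simp [normalCone]

theorem smul_mem_normalCone {t : ℝ} (ht : 0 ≤ t) (hu : u ∈ normalCone K p) :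
    t • u ∈ normalCone K p := fun k hk => by
  rw [real_inner_smul_left]
  exact mul_nonpos_of_nonneg_of_nonpos ht (hu k hk)

theorem eq_zero_of_mem_normalCone_of_mem_interior (hu : u ∈ normalCone K p)
    (hp : p ∈ interior K) : u = 0 := by
  have hmax : IsLocalMax (innerSL ℝ u) p := by
    filter_upwards [mem_interior_iff_mem_nhds.1 hp] with k hk
    simpa [inner_sub_right] using hu k hk
  have hzero : innerSL ℝ u = 0 := hmax.hasFDerivAt_eq_zero (innerSL ℝ u).hasFDerivAt
  simpa using DFunLike.congr_fun hzero u

theorem mem_frontier_of_sub_mem_normalCone (hz : z ∉ interior K) (hp : p ∈ K)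
    (hzp : z - p ∈ normalCone K p) : p ∈ frontier K := by
  refine ⟨subset_closure hp, fun hint => hz ?_⟩
  rwa [sub_eq_zero.1 (eq_zero_of_mem_normalCone_of_mem_interior hzp hint)]

theorem dist_le_dist_of_sub_mem_normalCone (hp : p ∈ K) (hq : q ∈ K)
    (hap : a - p ∈ normalCone K p) (hbq : b - q ∈ normalCone K q) : dist p q ≤ dist a b := by
  rw [dist_eq_norm, dist_eq_norm]
  have hsq : ‖p - q‖ * ‖p - q‖ ≤ ‖a - b‖ * ‖p - q‖ := by
    have hsum := add_nonpos (hap q hq) (hbq p hp)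
    have hexpand : ⟪a - p, q - p⟫ + ⟪b - q, p - q⟫ = ⟪p - q, p - q⟫ - ⟪a - b, p - q⟫ := by
      simp only [inner_sub_left, inner_sub_right]
      ring
    rw [← real_inner_self_eq_norm_mul_norm]
    linarith [real_inner_le_norm (a - b) (p - q)]
  rcases (norm_nonneg (p - q)).eq_or_lt with hzero | hpos
  · exact hzero ▸ norm_nonneg _
  · exact le_of_mul_le_mul_right hsq hpos

theorem exists_mem_sub_mem_normalCone (hne : K.Nonempty) (hK : IsComplete K) (hconv : Convex ℝ K)
    (z : E) : ∃ p ∈ K, z - p ∈ normalCone K p := by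
  obtain ⟨p, hp, hmin⟩ := exists_norm_eq_iInf_of_complete_convex hne hK hconv z
  exact ⟨p, hp, (norm_eq_iInf_iff_real_inner_le_zero hconv hp).1 hmin⟩

theorem LipschitzJoined.frontier_of_compl_interior (hK : IsComplete K) (hconv : Convex ℝ K)
    (hab : LipschitzJoined (interior K)ᶜ a b l) (hp : p ∈ K) (hap : a - p ∈ normalCone K p)
    (hq : q ∈ K) (hbq : b - q ∈ normalCone K q) : LipschitzJoined (frontier K) p q l := by
  choose π hπK hπ using exists_mem_sub_mem_normalCone ⟨p, hp⟩ hK hconv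
  have hlip : LipschitzWith 1 π := LipschitzWith.of_dist_le_mul fun c d => by
    simpa using dist_le_dist_of_sub_mem_normalCone (hπK c) (hπK d) (hπ c) (hπ d)
  have hπ_eq {c r : E} (hr : r ∈ K) (hcr : c - r ∈ normalCone K r) : π c = r :=
    dist_le_zero.1 <| by
      simpa using dist_le_dist_of_sub_mem_normalCone (hπK c) hr (hπ c) hcr
  rw [← hπ_eq hp hap, ← hπ_eq hq hbq]
  exact hab.map hlip fun c hc => mem_frontier_of_sub_mem_normalCone hc (hπK c) (hπ c)

theorem exists_mem_normalCone_norm_eq_one [CompleteSpace E] (hconv : Convex ℝ K)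
    (hint : (interior K).Nonempty) (hp : p ∉ interior K) : ∃ u ∈ normalCone K p, ‖u‖ = 1 := by
  obtain ⟨f, hf⟩ := geometric_hahn_banach_open_point hconv.interior isOpen_interior hp
  obtain ⟨u, rfl⟩ := (InnerProductSpace.toDual ℝ E).surjective f
  simp only [InnerProductSpace.toDual_apply_apply] at hf
  have hu : u ≠ 0 := by
    rintro rfl
    obtain ⟨k, hk⟩ := hint
    simpa using hf k hk
  have hnormal : u ∈ normalCone K p := fun k hk => by
    have hclosed : IsClosed {k | ⟪u, k - p⟫ ≤ 0} := isClosed_le (by fun_prop) (by fun_prop)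
    refine closure_minimal (fun k hk => ?_) hclosed
      (hconv.closure_interior_eq_closure_of_nonempty_interior hint ▸ subset_closure hk)
    simpa [inner_sub_right] using (hf k hk).le
  exact ⟨‖u‖⁻¹ • u, smul_mem_normalCone (by positivity) hnormal, norm_smul_inv_norm (𝕜 := ℝ) hu⟩

end NormalCone

section Plane

variable {E : Type*} [NormedAddCommGroup E] [InnerProductSpace ℝ E] {K : Set E} {u v w x y : E}
  {a₁ a₂ b₁ b₂ : ℝ}

theorem exists_norm_eq_one_smul_eq {F : Type*} [NormedAddCommGroup F] [NormedSpace ℝ F]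
    [Nontrivial F] (z : F) : ∃ w : F, ‖w‖ = 1 ∧ ‖z‖ • w = z := by
  rcases eq_or_ne z 0 with rfl | hz
  · obtain ⟨w, hw⟩ := exists_norm_eq F zero_le_one
    exact ⟨w, hw, by simp⟩
  · exact ⟨‖z‖⁻¹ • z, norm_smul_inv_norm (𝕜 := ℝ) hz, smul_inv_smul₀ (norm_ne_zero_iff.2 hz) z⟩

theorem nontrivial_orthogonal_span_singleton (hE : 1 < Module.rank ℝ E) (u : E) :
    Nontrivial (ℝ ∙ u)ᗮ := by
  refine Submodule.nontrivial_iff_ne_bot.2 fun hbot => hE.not_ge ?_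
  rw [← rank_top ℝ E, ← Submodule.orthogonal_eq_bot_iff.1 hbot]
  exact (rank_span_le _).trans_eq (by simp)

theorem exists_unit_orthogonal_eq_add (hE : 1 < Module.rank ℝ E) (hu : ‖u‖ = 1) (v : E) :
    ∃ w : E, ‖w‖ = 1 ∧ ⟪u, w⟫ = 0 ∧ ⟪u, v⟫ • u + ⟪w, v⟫ • w = v := by
  have := nontrivial_orthogonal_span_singleton hE u
  have hperp : v - ⟪u, v⟫ • u ∈ (ℝ ∙ u)ᗮ := by
    rw [Submodule.mem_orthogonal_singleton_iff_inner_right]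
    simp [inner_sub_right, real_inner_smul_right, hu]
  obtain ⟨⟨w, hwperp⟩, hw, hsmul⟩ := exists_norm_eq_one_smul_eq (⟨_, hperp⟩ : (ℝ ∙ u)ᗮ)
  have huw : ⟪u, w⟫ = 0 := Submodule.mem_orthogonal_singleton_iff_inner_right.1 hwperp
  have hv : ⟪u, v⟫ • u + ‖v - ⟪u, v⟫ • u‖ • w = v :=
    (congrArg (⟪u, v⟫ • u + ·) (congrArg Subtype.val hsmul)).trans (add_sub_cancel _ _)
  have hwv : ⟪w, v⟫ = ‖v - ⟪u, v⟫ • u‖ := by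
    have hww : ⟪w, w⟫ = 1 := inner_self_eq_one_of_norm_eq_one hw
    rw [← hv, inner_add_right, real_inner_smul_right, real_inner_smul_right,
      inner_eq_zero_symm.1 huw, hww, hv, mul_zero, zero_add, mul_one]
  exact ⟨w, hw, huw, hwv ▸ hv⟩

/-- The coordinates of the orthogonal projection to the plane with orthonormal basis `u`, `w`. -/
noncomputable def planeCoords (u w : E) : E →L[ℝ] ℝ × ℝ :=
  (innerSL ℝ u).prod (innerSL ℝ w)

/-- The point with `planeCoords` equal to `(s, r)` in the affine plane through `y` spanned by the
orthonormal vectors `u`, `w`. -/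
noncomputable def planeLift (u w y : E) (s r : ℝ) : E :=
  y + ((s - ⟪u, y⟫) • u + (r - ⟪w, y⟫) • w)

theorem planeCoords_planeLift (hu : ‖u‖ = 1) (hw : ‖w‖ = 1) (huw : ⟪u, w⟫ = 0) (s r : ℝ) :
    planeCoords u w (planeLift u w y s r) = (s, r) := by
  have hwu : ⟪w, u⟫ = 0 := inner_eq_zero_symm.1 huw
  simp [planeCoords, planeLift, inner_add_right, real_inner_smul_right, hu, hw, huw, hwu]

theorem lipschitzWith_planeLift_left (hu : ‖u‖ = 1) (r : ℝ) :
    LipschitzWith 1 fun s => planeLift u w y s r :=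
  LipschitzWith.of_dist_le_mul fun s s' => by
    simp [planeLift, dist_eq_norm, ← sub_smul, norm_smul, hu]

theorem lipschitzWith_planeLift_right (hw : ‖w‖ = 1) (s : ℝ) :
    LipschitzWith 1 (planeLift u w y s) :=
  LipschitzWith.of_dist_le_mul fun r r' => by
    simp [planeLift, dist_eq_norm, ← sub_smul, norm_smul, hw]

theorem planeLift_inner_inner (hx : ⟪u, x - y⟫ • u + ⟪w, x - y⟫ • w = x - y) :
    planeLift u w y ⟪u, x⟫ ⟪w, x⟫ = x := by
  rw [planeLift, ← inner_sub_right, ← inner_sub_right, hx, add_sub_cancel]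

theorem norm_sub_inner_smul_add_inner_smul_le (hu : ‖u‖ = 1) (hw : ‖w‖ = 1) (huw : ⟪u, w⟫ = 0)
    (z : E) : ‖z - (⟪u, z⟫ • u + ⟪w, z⟫ • w)‖ ≤ ‖z‖ := by
  have hnorm : ‖⟪u, z⟫ • u + ⟪w, z⟫ • w‖ ^ 2 = ⟪u, z⟫ ^ 2 + ⟪w, z⟫ ^ 2 := by
    simp [norm_add_sq_real, norm_smul, real_inner_smul_left, real_inner_smul_right, hu, hw, huw]
  have hinner : ⟪z, ⟪u, z⟫ • u + ⟪w, z⟫ • w⟫ = ⟪u, z⟫ ^ 2 + ⟪w, z⟫ ^ 2 := by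
    rw [inner_add_right, real_inner_smul_right, real_inner_smul_right, real_inner_comm u z,
      real_inner_comm w z, sq, sq]
  refine (sq_le_sq₀ (norm_nonneg _) (norm_nonneg z)).1 ?_
  rw [norm_sub_sq_real, hnorm, hinner]
  linarith [sq_nonneg ⟪u, z⟫, sq_nonneg ⟪w, z⟫]

theorem dist_planeLift_inner_inner_le (hu : ‖u‖ = 1) (hw : ‖w‖ = 1) (huw : ⟪u, w⟫ = 0) :
    dist x (planeLift u w y ⟪u, x⟫ ⟪w, x⟫) ≤ dist x y := by
  rw [planeLift, ← inner_sub_right, ← inner_sub_right, dist_eq_norm, dist_eq_norm, ← sub_sub]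
  exact norm_sub_inner_smul_add_inner_smul_le hu hw huw (x - y)

theorem segment_planeLift_subset_preimage (hu : ‖u‖ = 1) (hw : ‖w‖ = 1) (huw : ⟪u, w⟫ = 0) :
    segment ℝ x (planeLift u w y ⟪u, x⟫ ⟪w, x⟫) ⊆
      planeCoords u w ⁻¹' {planeCoords u w x} := by
  refine ((convex_singleton _).is_linear_preimage (planeCoords u w).isLinear).segment_subset rfl ?_
  exact planeCoords_planeLift hu hw huw _ _

theorem lipschitzJoined_planeLift {s r : ℝ} (hu : ‖u‖ = 1) (hw : ‖w‖ = 1) (huw : ⟪u, w⟫ = 0)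
    (hx : planeCoords u w x ∈ frontier (Icc a₁ a₂ ×ˢ Icc b₁ b₂))
    (hsr : (s, r) ∈ frontier (Icc a₁ a₂ ×ˢ Icc b₁ b₂)) :
    LipschitzJoined (planeCoords u w ⁻¹' frontier (Icc a₁ a₂ ×ˢ Icc b₁ b₂)) x
      (planeLift u w y s r) (dist x y + ((a₂ - a₁) + (b₂ - b₁))) := by
  have hfibre := (LipschitzJoined.of_segment_subset
    (segment_planeLift_subset_preimage (x := x) (y := y) hu hw huw)).mono
    (preimage_mono (singleton_subset_iff.2 hx)) (dist_planeLift_inner_inner_le hu hw huw)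
  refine hfibre.trans (lipschitzJoined_of_mem_frontier_rectangle (f := planeLift u w y)
    (lipschitzWith_planeLift_left hu) (lipschitzWith_planeLift_right hw) (fun p hp => ?_) hx hsr)
  rwa [mem_preimage, planeCoords_planeLift hu hw huw]

theorem isOpenMap_planeCoords (hu : ‖u‖ = 1) (hw : ‖w‖ = 1) (huw : ⟪u, w⟫ = 0) :
    IsOpenMap (planeCoords u w) :=
  (planeCoords u w).toLinearMap.isOpenMap_of_finiteDimensional fun p =>
    ⟨planeLift u w 0 p.1 p.2, planeCoords_planeLift hu hw huw p.1 p.2⟩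

theorem exists_Icc_mapsTo_of_lipschitzWith_one {X : Type*} [PseudoMetricSpace X] {K : Set X}
    {f : X → ℝ} (hf : LipschitzWith 1 f) (hK : IsBounded K) :
    ∃ a b, MapsTo f K (Icc a b) ∧ b - a ≤ Metric.diam K := by
  have hbdd : IsBounded (f '' K) := hf.isBounded_image hK
  refine ⟨sInf (f '' K), sSup (f '' K), mapsTo_iff_image_subset.2 hbdd.subset_Icc_sInf_sSup, ?_⟩
  simpa [Real.diam_eq hbdd] using hf.diam_image_le K hK

theorem lipschitzWith_one_inner (hu : ‖u‖ = 1) : LipschitzWith 1 fun z : E => ⟪u, z⟫ := by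
  have hnorm : ‖innerSL ℝ u‖₊ = 1 := NNReal.eq (by simpa using hu)
  simpa [hnorm] using (innerSL ℝ u).lipschitz

theorem exists_rectangle_planeCoords (hK : IsBounded K) (hu : ‖u‖ = 1) (hw : ‖w‖ = 1)
    (hx : x ∈ K) (hux : u ∈ normalCone K x) :
    ∃ a₁ a₂ b₁ b₂ : ℝ, MapsTo (planeCoords u w) K (Icc a₁ a₂ ×ˢ Icc b₁ b₂) ∧
      planeCoords u w x ∈ frontier (Icc a₁ a₂ ×ˢ Icc b₁ b₂) ∧
      a₂ - a₁ ≤ Metric.diam K ∧ b₂ - b₁ ≤ Metric.diam K := by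
  obtain ⟨a₁, a₂, hu_mem, ha⟩ :=
    exists_Icc_mapsTo_of_lipschitzWith_one (lipschitzWith_one_inner hu) hK
  obtain ⟨b₁, b₂, hw_mem, hb⟩ :=
    exists_Icc_mapsTo_of_lipschitzWith_one (lipschitzWith_one_inner hw) hK
  have hx_max : ∀ k ∈ K, ⟪u, k⟫ ≤ ⟪u, x⟫ := fun k hk => by
    simpa [inner_sub_right] using hux k hk
  refine ⟨a₁, ⟪u, x⟫, b₁, b₂, fun k hk => ⟨⟨(hu_mem hk).1, hx_max k hk⟩, hw_mem hk⟩, ?_,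
    (sub_le_sub_right (hu_mem hx).2 a₁).trans ha, hb⟩
  rw [frontier_prod_eq, frontier_Icc (hu_mem hx).1, closure_Icc, closure_Icc]
  exact Or.inr ⟨Or.inr rfl, hw_mem hx⟩

theorem exists_lipschitzJoined_add_smul (hE : 1 < Module.rank ℝ E) (hK : IsBounded K)
    (hu : ‖u‖ = 1) (hux : u ∈ normalCone K x) (hv : v ≠ 0) (hx : x ∈ K) (hy : y ∈ K) :
    ∃ t : ℝ, 0 ≤ t ∧ LipschitzJoined (interior K)ᶜ x (y + t • v) (3 * Metric.diam K) := by
  obtain ⟨w, hw, huw, hvw⟩ := exists_unit_orthogonal_eq_add hE hu v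
  obtain ⟨a₁, a₂, b₁, b₂, hKB, hxB, ha, hb⟩ := exists_rectangle_planeCoords hK hu hw hx hux
  have hdir : planeCoords u w v ≠ 0 := fun h => hv <| by
    obtain ⟨huv, hwv⟩ := Prod.mk.inj h
    rw [← hvw]
    simp_all
  have hbdd : IsBounded (Icc a₁ a₂ ×ˢ Icc b₁ b₂) :=
    (Metric.isBounded_Icc a₁ a₂).prod (Metric.isBounded_Icc b₁ b₂)
  obtain ⟨t, ht, hexit⟩ := exists_nonneg_add_smul_mem_frontier hbdd (hKB hy) hdir
  rw [← map_smul, ← map_add] at hexit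
  have hlift : planeLift u w y ⟪u, y + t • v⟫ ⟪w, y + t • v⟫ = y + t • v := by
    refine planeLift_inner_inner ?_
    rw [add_sub_cancel_left, real_inner_smul_right, real_inner_smul_right, mul_smul, mul_smul,
      ← smul_add, hvw]
  have houtside : planeCoords u w ⁻¹' frontier (Icc a₁ a₂ ×ˢ Icc b₁ b₂) ⊆ (interior K)ᶜ :=
    fun z hz hint => hz.2 ((isOpenMap_planeCoords hu hw huw).mapsTo_interior hKB hint)
  refine ⟨t, ht, hlift ▸ (lipschitzJoined_planeLift hu hw huw hxB hexit).mono houtside ?_⟩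
  linarith [Metric.dist_le_diam_of_mem hK hx hy]

end Plane

section Frontier

variable {E : Type*} [NormedAddCommGroup E] [InnerProductSpace ℝ E] {K : Set E} {x y : E}

theorem lipschitzJoined_frontier_of_isClosed [CompleteSpace E] (hE : 1 < Module.rank ℝ E)
    (hclosed : IsClosed K) (hK : IsBounded K) (hconv : Convex ℝ K)
    (hint : (interior K).Nonempty) (hx : x ∈ frontier K) (hy : y ∈ frontier K) :
    LipschitzJoined (frontier K) x y (3 * Metric.diam K) := by
  have hxK : x ∈ K := hclosed.frontier_subset hx
  have hyK : y ∈ K := hclosed.frontier_subset hy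
  obtain ⟨u, hux, hu⟩ := exists_mem_normalCone_norm_eq_one hconv hint hx.2
  obtain ⟨v, hvy, hv⟩ := exists_mem_normalCone_norm_eq_one hconv hint hy.2
  have hv0 : v ≠ 0 := norm_ne_zero_iff.1 (hv ▸ one_ne_zero)
  obtain ⟨t, ht, hjoined⟩ := exists_lipschitzJoined_add_smul hE hK hu hux hv0 hxK hyK
  refine hjoined.frontier_of_compl_interior hclosed.isComplete hconv hxK ?_ hyK ?_
  · exact (sub_self x).symm ▸ zero_mem_normalCone
  · exact (add_sub_cancel_left y (t • v)).symm ▸ smul_mem_normalCone ht hvy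

theorem lipschitzJoined_frontier_of_interior_eq_empty (hK : IsBounded K) (hconv : Convex ℝ K)
    (hint : interior K = ∅) (hx : x ∈ frontier K) (hy : y ∈ frontier K) :
    LipschitzJoined (frontier K) x y (Metric.diam K) := by
  have hfrontier : frontier K = closure K := by rw [frontier, hint, sdiff_empty]
  rw [hfrontier] at hx hy ⊢
  refine (LipschitzJoined.of_segment_subset (hconv.closure.segment_subset hx hy)).mono
    Subset.rfl ?_
  rw [← Metric.diam_closure]
  exact Metric.dist_le_diam_of_mem hK.closure hx hy

end Frontier

theorem intrinsic_diameter_le_three_extrinsic_general {E : Type*} [NormedAddCommGroup E]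
    [InnerProductSpace ℝ E] [CompleteSpace E] (hE : 1 < Module.rank ℝ E) {K : Set E}
    (hK : IsBounded K) (hconv : Convex ℝ K) {x y : E} (hx : x ∈ frontier K)
    (hy : y ∈ frontier K) :
    ∃ γ : ℝ → E, ContinuousOn γ (Icc 0 1) ∧ γ 0 = x ∧ γ 1 = y ∧ γ '' Icc 0 1 ⊆ frontier K ∧
      eVariationOn γ (Icc 0 1) ≤ ENNReal.ofReal (3 * Metric.diam K) := by
  refine LipschitzJoined.exists_path ?_
  rcases (interior K).eq_empty_or_nonempty with hint | hint
  · exact (lipschitzJoined_frontier_of_interior_eq_empty hK hconv hint hx hy).mono Subset.rfl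
      (by linarith [Metric.diam_nonneg (s := K)])
  · have hint_eq := hconv.interior_closure_eq_interior_of_nonempty_interior hint
    have hfrontier : frontier (closure K) = frontier K := by
      rw [frontier, closure_closure, hint_eq, frontier]
    rw [← hfrontier] at hx hy ⊢
    rw [← Metric.diam_closure]
    exact lipschitzJoined_frontier_of_isClosed hE isClosed_closure hK.closure hconv.closure
      (hint_eq ▸ hint) hx hy

/-- Let `n ≥ 2` and let `K` be a nonempty compact convex subset of `ℝⁿ`.
Then any two points of the frontier of `K` are joined by a continuous path inside the
frontier whose length (total variation) is at most `3 · diam K`: the intrinsic diameter of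
the boundary of a compact convex body is at most three times its extrinsic diameter. -/
theorem intrinsic_diameter_le_three_extrinsic
    (n : ℕ) (hn : 2 ≤ n)
    (K : Set (EuclideanSpace ℝ (Fin n)))
    (hKne : K.Nonempty) (hKcomp : IsCompact K) (hKconv : Convex ℝ K)
    (x y : EuclideanSpace ℝ (Fin n)) (hx : x ∈ frontier K) (hy : y ∈ frontier K) :
    ∃ γ : ℝ → EuclideanSpace ℝ (Fin n),
      ContinuousOn γ (Set.Icc 0 1) ∧ γ 0 = x ∧ γ 1 = y ∧
      γ '' Set.Icc 0 1 ⊆ frontier K ∧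
      eVariationOn γ (Set.Icc 0 1) ≤ ENNReal.ofReal (3 * Metric.diam K) := by
  have hrank : 1 < Module.rank ℝ (EuclideanSpace ℝ (Fin n)) :=
    Module.lt_rank_of_lt_finrank (by simpa using Nat.lt_of_succ_le hn)
  exact intrinsic_diameter_le_three_extrinsic_general hrank hKcomp.isBounded hKconv hx hy
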